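/- Lower bound on the first moment of the score at the oversmoothing threshold: let Φ̄(t) = ∫_t^∞ φ(u)du. With ζ_1 = ζ(α_1) as above and π_1 = (1/n)·#{i : |θ_{0,i}| ≥ ζ_1} for θ_0 ∈ ℓ0[s_n], a solution 0 < α ≤ α_1 of the equation Φ̄(ζ(α) − ζ_1) = 8·π_1^{−1}·α·m̃(α) exists. Let α_3 be the largest such solution and ζ_3 = ζ(α_3). Then, provided the constant c_0 in the condition s_n ≤ c_0·n is small enough, m_1(ζ_1, α_3) ≥ (1/4)·β(ζ_3)·Φ̄(ζ_3 − ζ_1). -/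

import Mathlib

/-!
Statement 11: lower bound on the first moment of the score at the
oversmoothing threshold, spike and Cauchy slab prior.
-/

open MeasureTheory Real Set

noncomputable section

/-- Standard normal density. -/
def phi (x : ℝ) : ℝ := Real.exp (-x ^ 2 / 2) / Real.sqrt (2 * Real.pi)

/-- Standard Cauchy density. -/
def cauchyDen (x : ℝ) : ℝ := (Real.pi * (1 + x ^ 2))⁻¹

/-- Convolution `g = φ * γ`. -/
def conv (γ : ℝ → ℝ) (x : ℝ) : ℝ := ∫ u, phi (x - u) * γ u

/-- `β(x) = g(x)/φ(x) - 1`. -/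
def betaFn (γ : ℝ → ℝ) (x : ℝ) : ℝ := conv γ x / phi x - 1

/-- `m₁(μ, α) = E_μ β(X, α)`, `X ~ N(μ,1)`, where `β(x,α) = β(x)/(1 + αβ(x))`. -/
def m1 (γ : ℝ → ℝ) (μ α : ℝ) : ℝ :=
  ∫ x, betaFn γ x / (1 + α * betaFn γ x) ∂(ProbabilityTheory.gaussianReal μ 1)

/-- `m̃(α) = -m₁(0, α)`. -/
def mtilde (γ : ℝ → ℝ) (α : ℝ) : ℝ := -m1 γ 0 α

/-- Upper tail of the standard normal, `Φ̄(t) = ∫_t^∞ φ`. -/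
def Phibar (t : ℝ) : ℝ := ∫ u in Set.Ioi t, phi u

/-- The class `ℓ₀[s]` of `s`-sparse vectors. -/
def ell0 (n s : ℕ) : Set (Fin n → ℝ) := {θ | Nat.card {i : Fin n // θ i ≠ 0} ≤ s}

/-!
Under `N(0, 1)` the score `β` has mean zero, so `m̃(0) = 0`; since `β / (1 + αβ)` decreases in
`α`, `m̃` increases and is positive on `(0, 1)`.  A small `s_n / n = d α₁ m̃(α₁)` therefore forces
`α₁` to be small, that is, `ζ₁` to be large.

For `ζ₁` large, `β(z) Φ̄(z - ζ₁)` is large uniformly in `z ≥ ζ₁`: the slab has at least exponential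
tails, while `Φ̄(z - ζ₁) / φ(z)` grows like `exp (ζ₁ z - ζ₁² / 2)`.  Two consequences follow.

* In the coordinate `z = ζ(α)` the equation reads `β(z) Φ̄(z - ζ₁) = 8 π₁⁻¹ m̃(1 / β(z))`.  At
  `z = ζ₁` the right side wins because `π₁ ≤ s_n / n`; as `z → ∞` the left side wins because `m̃` is
  bounded.  The intermediate value theorem gives a solution.
* Bounding the score below by `β(ζ) / 2` beyond `ζ = ζ(α)` and by `-2` elsewhere gives
  `m₁(ζ₁, α) ≥ β(ζ) Φ̄(ζ - ζ₁) / 2 - 2`, and the constant is absorbed by a quarter of the main term.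
-/

open ProbabilityTheory Filter

section NormalDensity

lemma phi_pos (x : ℝ) : 0 < phi x := by
  unfold phi
  positivity

lemma continuous_phi : Continuous phi := by
  unfold phi
  fun_prop

lemma phi_le_phi_of_abs_le {x y : ℝ} (h : |x| ≤ |y|) : phi y ≤ phi x := by
  unfold phi
  have := sq_le_sq.2 h
  gcongr

lemma phi_sub (x u : ℝ) : phi (x - u) = phi x * (exp (x * u) * exp (-u ^ 2 / 2)) := by
  unfold phi
  rw [div_mul_eq_mul_div, ← exp_add, ← exp_add]
  congr 2
  ring

lemma gaussianPDFReal_one (μ x : ℝ) : gaussianPDFReal μ 1 x = phi (x - μ) := by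
  simp only [gaussianPDFReal, phi, NNReal.coe_one, mul_one]
  rw [inv_mul_eq_div]

lemma gaussianPDFReal_zero_one : gaussianPDFReal 0 1 = phi := by
  ext x
  rw [gaussianPDFReal_one, sub_zero]

lemma integrable_phi : Integrable phi :=
  gaussianPDFReal_zero_one ▸ integrable_gaussianPDFReal 0 1

lemma integral_phi : ∫ x, phi x = 1 :=
  gaussianPDFReal_zero_one ▸ integral_gaussianPDFReal_eq_one 0 one_ne_zero

lemma integrable_gaussianReal_iff_phi_mul {f : ℝ → ℝ} :
    Integrable f (gaussianReal 0 1) ↔ Integrable fun x => phi x * f x := by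
  rw [gaussianReal_of_var_ne_zero _ one_ne_zero,
    integrable_withDensity_iff_integrable_smul' (measurable_gaussianPDF _ _)
      (ae_of_all _ fun _ => gaussianPDF_lt_top)]
  simp only [toReal_gaussianPDF, gaussianPDFReal_zero_one, smul_eq_mul]

lemma integral_gaussianReal_eq_integral_phi_mul (f : ℝ → ℝ) :
    ∫ x, f x ∂gaussianReal 0 1 = ∫ x, phi x * f x := by
  rw [integral_gaussianReal_eq_integral_smul one_ne_zero]
  simp only [gaussianPDFReal_zero_one, smul_eq_mul]

lemma isOpenPosMeasure_gaussianReal (μ : ℝ) {v : NNReal} (hv : v ≠ 0) :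
    (gaussianReal μ v).IsOpenPosMeasure :=
  (gaussianReal_absolutelyContinuous' μ hv).isOpenPosMeasure

lemma Phibar_le_one (t : ℝ) : Phibar t ≤ 1 :=
  integral_phi ▸ setIntegral_le_integral integrable_phi (ae_of_all _ fun x => (phi_pos x).le)

lemma continuous_Phibar : Continuous Phibar := by
  have h : Phibar = fun t => Phibar 0 - ∫ u in (0 : ℝ)..t, phi u := by
    ext t
    have := intervalIntegral.integral_interval_add_Ioi (a := 0) (b := t)
      integrable_phi.integrableOn integrable_phi.integrableOn
    simp only [Phibar]
    linarith
  rw [h]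
  exact continuous_const.sub
    (intervalIntegral.continuous_primitive (fun _ _ => integrable_phi.intervalIntegrable) 0)

lemma phi_add_one_le_Phibar {t : ℝ} (ht : 0 ≤ t) : phi (t + 1) ≤ Phibar t := by
  calc phi (t + 1) = ∫ _ in Ioc t (t + 1), phi (t + 1) := by simp
    _ ≤ ∫ u in Ioc t (t + 1), phi u := by
      refine setIntegral_mono_on (integrable_const _) integrable_phi.integrableOn
        measurableSet_Ioc fun u hu => phi_le_phi_of_abs_le ?_
      rw [abs_of_nonneg (ht.trans hu.1.le), abs_of_nonneg (by linarith)]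
      exact hu.2
    _ ≤ Phibar t := setIntegral_mono_set integrable_phi.integrableOn
      (ae_of_all _ fun x => (phi_pos x).le) Ioc_subset_Ioi_self.eventuallyLE

lemma gaussianReal_real_Ioi (μ z : ℝ) : (gaussianReal μ 1).real (Ioi z) = Phibar (z - μ) := by
  rw [measureReal_def, gaussianReal_apply_eq_integral _ one_ne_zero,
    ENNReal.toReal_ofReal (setIntegral_nonneg measurableSet_Ioi
      fun x _ => gaussianPDFReal_nonneg μ 1 x)]
  simp only [gaussianPDFReal_one]
  have h := (measurePreserving_sub_right volume μ).setIntegral_preimage_emb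
    (MeasurableEquiv.subRight μ).measurableEmbedding phi (Ioi (z - μ))
  rwa [preimage_sub_const_Ioi, sub_add_cancel] at h

end NormalDensity

section Convolution

variable {γ : ℝ → ℝ}

lemma integrable_phi_sub_mul (hγ : Integrable γ) (x : ℝ) :
    Integrable fun u => phi (x - u) * γ u := by
  refine hγ.bdd_mul (c := phi 0) (continuous_phi.comp (by fun_prop)).aestronglyMeasurable
    (ae_of_all _ fun u => ?_)
  rw [norm_of_nonneg (phi_pos _).le]
  exact phi_le_phi_of_abs_le (by simp)

lemma conv_nonneg (hγ : ∀ u, 0 ≤ γ u) (x : ℝ) : 0 ≤ conv γ x :=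
  integral_nonneg fun u => mul_nonneg (phi_pos _).le (hγ u)

lemma conv_eq_convolution (γ : ℝ → ℝ) :
    conv γ = convolution γ phi (ContinuousLinearMap.mul ℝ ℝ) volume := by
  ext x
  simp only [conv, convolution, ContinuousLinearMap.mul_apply', mul_comm]

lemma continuous_conv (hγ : Integrable γ) : Continuous (conv γ) := by
  rw [conv_eq_convolution]
  refine BddAbove.continuous_convolution_right_of_integrable _ ⟨phi 0, ?_⟩ hγ continuous_phi
  rintro _ ⟨x, rfl⟩
  simpa only [norm_of_nonneg (phi_pos x).le] using phi_le_phi_of_abs_le (by simp)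

lemma integrable_conv (hγ : Integrable γ) : Integrable (conv γ) := by
  rw [conv_eq_convolution]
  exact hγ.integrable_convolution _ integrable_phi

lemma integral_conv (hγ : Integrable γ) : ∫ x, conv γ x = ∫ u, γ u := by
  rw [conv_eq_convolution, integral_convolution _ hγ integrable_phi, integral_phi,
    ContinuousLinearMap.mul_apply', mul_one]

lemma phi_one_mul_le_conv (hγ : Integrable γ) (hγ0 : ∀ u, 0 ≤ γ u) {x m : ℝ} (hm : 0 ≤ m)
    (h : ∀ u ∈ Ioc x (x + 1), m ≤ γ u) : phi 1 * m ≤ conv γ x := by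
  calc phi 1 * m = ∫ _ in Ioc x (x + 1), phi 1 * m := by simp
    _ ≤ ∫ u in Ioc x (x + 1), phi (x - u) * γ u := by
      refine setIntegral_mono_on (integrable_const _) (integrable_phi_sub_mul hγ x).integrableOn
        measurableSet_Ioc fun u hu => ?_
      refine mul_le_mul (phi_le_phi_of_abs_le ?_) (h u hu) hm (phi_pos _).le
      rw [abs_one, abs_le]
      constructor <;> linarith [hu.1, hu.2]
    _ ≤ conv γ x := setIntegral_le_integral (integrable_phi_sub_mul hγ x)
      (ae_of_all _ fun u => mul_nonneg (phi_pos _).le (hγ0 u))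

end Convolution

section CoshTransform

lemma strictMonoOn_integral_cosh_mul {w : ℝ → ℝ} (hw : ∀ u, 0 ≤ w u)
    (hsupp : 0 < volume (Function.support w))
    (hint : ∀ x, Integrable fun u => cosh (x * u) * w u) :
    StrictMonoOn (fun x => ∫ u, cosh (x * u) * w u) (Ici 0) := by
  intro x hx y hy hxy
  rw [mem_Ici] at hx hy
  rw [← sub_pos, ← integral_sub (hint y) (hint x), integral_pos_iff_support_of_nonneg]
  · have hsub : Function.support w \ {0} ⊆
        Function.support fun u => cosh (y * u) * w u - cosh (x * u) * w u := by
      rintro u ⟨hwu, hu⟩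
      have hcosh : cosh (x * u) < cosh (y * u) := by
        rw [cosh_lt_cosh, abs_mul, abs_mul, abs_of_nonneg hx, abs_of_nonneg hy]
        exact mul_lt_mul_of_pos_right hxy (abs_pos.2 hu)
      exact (sub_pos.2 (mul_lt_mul_of_pos_right hcosh ((hw u).lt_of_ne' hwu))).ne'
    refine lt_of_lt_of_le ?_ (measure_mono hsub)
    rwa [measure_sdiff_null (measure_singleton 0)]
  · intro u
    have hcosh : cosh (x * u) ≤ cosh (y * u) := by
      rw [cosh_le_cosh, abs_mul, abs_mul, abs_of_nonneg hx, abs_of_nonneg hy]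
      gcongr
    exact sub_nonneg.2 (mul_le_mul_of_nonneg_right hcosh (hw u))
  · exact (hint y).sub (hint x)

variable {γ : ℝ → ℝ}

lemma integrable_exp_mul_exp_mul (hγ : Integrable γ) (x : ℝ) :
    Integrable fun u => exp (x * u) * (exp (-u ^ 2 / 2) * γ u) := by
  refine ((integrable_phi_sub_mul hγ x).const_mul (phi x)⁻¹).congr (ae_of_all _ fun u => ?_)
  have := (phi_pos x).ne'
  simp only [phi_sub]
  field_simp

lemma integrable_cosh_mul_exp_mul (hγ : Integrable γ) (x : ℝ) :
    Integrable fun u => cosh (x * u) * (exp (-u ^ 2 / 2) * γ u) := by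
  refine (((integrable_exp_mul_exp_mul hγ x).add
    (integrable_exp_mul_exp_mul hγ (-x))).div_const 2).congr (ae_of_all _ fun u => ?_)
  simp only [Pi.add_apply, cosh_eq, neg_mul]
  ring

lemma betaFn_add_one_eq_integral_exp (γ : ℝ → ℝ) (x : ℝ) :
    betaFn γ x + 1 = ∫ u, exp (x * u) * (exp (-u ^ 2 / 2) * γ u) := by
  rw [betaFn, sub_add_cancel, div_eq_iff (phi_pos x).ne', mul_comm, ← integral_const_mul, conv]
  simp only [phi_sub, mul_assoc]

lemma betaFn_neg (hγ : Function.Even γ) (x : ℝ) : betaFn γ (-x) = betaFn γ x := by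
  have h : betaFn γ (-x) + 1 = betaFn γ x + 1 := by
    rw [betaFn_add_one_eq_integral_exp, betaFn_add_one_eq_integral_exp, ← integral_neg_eq_self]
    simp only [neg_mul_neg, neg_sq, hγ _]
  exact add_right_cancel h

-- Symmetrizing `φ(x - u) / φ(x) = exp (x u) exp (-u² / 2)` in `u` makes monotonicity visible.
lemma betaFn_add_one_eq_integral_cosh (hγ : Integrable γ) (hγe : Function.Even γ) (x : ℝ) :
    betaFn γ x + 1 = ∫ u, cosh (x * u) * (exp (-u ^ 2 / 2) * γ u) := by
  have hsum : betaFn γ x + 1 + (betaFn γ (-x) + 1) =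
      2 * ∫ u, cosh (x * u) * (exp (-u ^ 2 / 2) * γ u) := by
    rw [betaFn_add_one_eq_integral_exp, betaFn_add_one_eq_integral_exp, ← integral_add
      (integrable_exp_mul_exp_mul hγ x) (integrable_exp_mul_exp_mul hγ (-x)), ← integral_const_mul]
    congr 1 with u
    rw [cosh_eq, neg_mul]
    ring
  rw [betaFn_neg hγe] at hsum
  linarith

end CoshTransform

section Beta

variable {γ : ℝ → ℝ}

lemma continuous_betaFn (hγ : Integrable γ) : Continuous (betaFn γ) :=
  ((continuous_conv hγ).div continuous_phi fun x => (phi_pos x).ne').sub continuous_const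

lemma neg_one_le_betaFn (hγ : ∀ u, 0 ≤ γ u) (x : ℝ) : -1 ≤ betaFn γ x := by
  have := div_nonneg (conv_nonneg hγ x) (phi_pos x).le
  unfold betaFn
  linarith

lemma phi_mul_betaFn (γ : ℝ → ℝ) (x : ℝ) : phi x * betaFn γ x = conv γ x - phi x := by
  rw [betaFn, mul_sub, mul_div_cancel₀ _ (phi_pos x).ne', mul_one]

lemma integrable_betaFn (hγ : Integrable γ) : Integrable (betaFn γ) (gaussianReal 0 1) := by
  simp only [integrable_gaussianReal_iff_phi_mul, phi_mul_betaFn]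
  exact (integrable_conv hγ).sub integrable_phi

lemma integral_betaFn (hγ : Integrable γ) :
    ∫ x, betaFn γ x ∂gaussianReal 0 1 = (∫ u, γ u) - 1 := by
  simp only [integral_gaussianReal_eq_integral_phi_mul, phi_mul_betaFn]
  rw [integral_sub (integrable_conv hγ) integrable_phi, integral_conv hγ, integral_phi]

lemma mul_exp_sub_one_le_betaFn_mul_Phibar (hγ : Integrable γ) {C c : ℝ} (hC : 0 ≤ C) (hc : 0 ≤ c)
    (htail : ∀ u, C * exp (-(c * |u|)) ≤ γ u) {z₁ z : ℝ} (hz₁ : 2 * c + 3 ≤ z₁) (hz : z₁ ≤ z) :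
    phi 1 * (C * exp (-c)) * exp z - 1 ≤ betaFn γ z * Phibar (z - z₁) := by
  have hγ0 (u : ℝ) : 0 ≤ γ u := le_trans (by positivity) (htail u)
  have hconv : phi 1 * (C * exp (-(c * (z + 1)))) ≤ conv γ z := by
    refine phi_one_mul_le_conv hγ hγ0 (by positivity) fun u hu => le_trans ?_ (htail u)
    rw [abs_of_nonneg (by linarith [hu.1])]
    gcongr
    exact hu.2
  have hPhibar : phi z * exp ((c + 1) * z) ≤ Phibar (z - z₁) := by
    refine le_trans ?_ (phi_add_one_le_Phibar (sub_nonneg.2 hz))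
    unfold phi
    rw [div_mul_eq_mul_div, ← exp_add]
    gcongr
    nlinarith [mul_nonneg (by linarith : 0 ≤ z₁ - 2 * c - 3) (by linarith : 0 ≤ z),
      mul_nonneg (by linarith : 0 ≤ z₁ - 1) (by linarith : 0 ≤ z - z₁ + 1)]
  have hprod : phi 1 * (C * exp (-c)) * exp z ≤ conv γ z / phi z * Phibar (z - z₁) := by
    rw [div_mul_eq_mul_div, le_div_iff₀ (phi_pos z)]
    calc phi 1 * (C * exp (-c)) * exp z * phi z
        = phi 1 * (C * exp (-(c * (z + 1)))) * (phi z * exp ((c + 1) * z)) := by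
          have : exp (-c) * exp z = exp (-(c * (z + 1))) * exp ((c + 1) * z) := by
            rw [← exp_add, ← exp_add]
            ring_nf
          linear_combination phi 1 * C * phi z * this
      _ ≤ conv γ z * Phibar (z - z₁) :=
          mul_le_mul hconv hPhibar (by have := phi_pos z; positivity) (conv_nonneg hγ0 z)
  rw [betaFn, sub_mul, one_mul]
  linarith [Phibar_le_one (z - z₁)]

lemma exists_forall_le_betaFn_mul_Phibar (hγ : Integrable γ) {C c : ℝ} (hC : 0 < C) (hc : 0 ≤ c)
    (htail : ∀ u, C * exp (-(c * |u|)) ≤ γ u) (M : ℝ) :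
    ∃ Z, 0 ≤ Z ∧ ∀ z₁, Z ≤ z₁ → (∀ z, z₁ ≤ z → M ≤ betaFn γ z * Phibar (z - z₁)) ∧
      Tendsto (fun z => betaFn γ z * Phibar (z - z₁)) atTop atTop := by
  have hK : 0 < phi 1 * (C * exp (-c)) := mul_pos (phi_pos 1) (by positivity)
  have htend : Tendsto (fun z => phi 1 * (C * exp (-c)) * exp z - 1) atTop atTop :=
    tendsto_atTop_add_const_right _ _ (tendsto_exp_atTop.const_mul_atTop hK)
  obtain ⟨Z, hZ⟩ := eventually_atTop.1 (htend.eventually_ge_atTop M)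
  refine ⟨max Z (2 * c + 3), le_max_of_le_right (by linarith), fun z₁ hz₁ => ?_⟩
  rw [max_le_iff] at hz₁
  have hle (z : ℝ) (hz : z₁ ≤ z) :=
    mul_exp_sub_one_le_betaFn_mul_Phibar hγ hC.le hc htail hz₁.2 hz
  exact ⟨fun z hz => (hZ z (hz₁.1.trans hz)).trans (hle z hz),
    tendsto_atTop_mono' _ ((eventually_ge_atTop z₁).mono hle) htend⟩

end Beta

/-- The score `β(x, α) = β(x) / (1 + α β(x))`, the integrand of `m1`. -/
def score (γ : ℝ → ℝ) (a x : ℝ) : ℝ := betaFn γ x / (1 + a * betaFn γ x)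

section Score

variable {γ : ℝ → ℝ} {a b : ℝ}

lemma m1_eq_integral_score (γ : ℝ → ℝ) (μ a : ℝ) :
    m1 γ μ a = ∫ x, score γ a x ∂gaussianReal μ 1 := rfl

lemma mtilde_eq_neg_integral_score (γ : ℝ → ℝ) (a : ℝ) :
    mtilde γ a = -∫ x, score γ a x ∂gaussianReal 0 1 := rfl

lemma one_sub_le_one_add_mul_betaFn (hγ : ∀ u, 0 ≤ γ u) (ha : 0 ≤ a) (x : ℝ) :
    1 - a ≤ 1 + a * betaFn γ x := by
  nlinarith [neg_one_le_betaFn hγ x]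

lemma one_add_mul_betaFn_pos (hγ : ∀ u, 0 ≤ γ u) (ha : a ∈ Ico 0 1) (x : ℝ) :
    0 < 1 + a * betaFn γ x :=
  (sub_pos.2 ha.2).trans_le (one_sub_le_one_add_mul_betaFn hγ ha.1 x)

lemma continuous_score (hγ : Integrable γ) (hγ0 : ∀ u, 0 ≤ γ u) (ha : a ∈ Ico 0 1) :
    Continuous (score γ a) := by
  have hβ := continuous_betaFn hγ
  exact hβ.div (by fun_prop) fun x => (one_add_mul_betaFn_pos hγ0 ha x).ne'

lemma abs_score_le (hγ : ∀ u, 0 ≤ γ u) (ha : 0 ≤ a) (hab : a ≤ b) (hb : b < 1) (x : ℝ) :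
    |score γ a x| ≤ |betaFn γ x| / (1 - b) := by
  rw [score, abs_div, abs_of_pos (one_add_mul_betaFn_pos hγ ⟨ha, hab.trans_lt hb⟩ x)]
  gcongr
  linarith [one_sub_le_one_add_mul_betaFn hγ ha x]

lemma neg_inv_one_sub_le_score (hγ : ∀ u, 0 ≤ γ u) (ha : a ∈ Ico 0 1) (x : ℝ) :
    -(1 - a)⁻¹ ≤ score γ a x := by
  rw [score, neg_le, ← neg_div, div_le_iff₀ (one_add_mul_betaFn_pos hγ ha x), inv_mul_eq_div,
    le_div_iff₀ (sub_pos.2 ha.2)]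
  linarith [neg_one_le_betaFn hγ x]

lemma score_le_inv (hγ : ∀ u, 0 ≤ γ u) (ha : a ∈ Ioo 0 1) (x : ℝ) : score γ a x ≤ a⁻¹ := by
  rw [score, div_le_iff₀ (one_add_mul_betaFn_pos hγ ⟨ha.1.le, ha.2⟩ x), inv_mul_eq_div,
    le_div_iff₀ ha.1]
  linarith

lemma half_inv_le_score (ha : 0 < a) {x : ℝ} (hx : a⁻¹ ≤ betaFn γ x) :
    a⁻¹ / 2 ≤ score γ a x := by
  have hβ : 0 < betaFn γ x := (inv_pos.2 ha).trans_le hx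
  rw [score, le_div_iff₀ (by positivity)]
  linear_combination hx / 2 + betaFn γ x / 2 * inv_mul_cancel₀ ha.ne'

lemma score_le_score (hγ : ∀ u, 0 ≤ γ u) (ha : 0 ≤ a) (hab : a ≤ b) (hb : b < 1) (x : ℝ) :
    score γ b x ≤ score γ a x := by
  rw [score, score, div_le_div_iff₀ (one_add_mul_betaFn_pos hγ ⟨ha.trans hab, hb⟩ x)
    (one_add_mul_betaFn_pos hγ ⟨ha, hab.trans_lt hb⟩ x)]
  nlinarith [sq_nonneg (betaFn γ x)]

lemma score_lt_score (hγ : ∀ u, 0 ≤ γ u) (ha : 0 ≤ a) (hab : a < b) (hb : b < 1) {x : ℝ}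
    (hx : betaFn γ x ≠ 0) : score γ b x < score γ a x := by
  rw [score, score, div_lt_div_iff₀ (one_add_mul_betaFn_pos hγ ⟨ha.trans hab.le, hb⟩ x)
    (one_add_mul_betaFn_pos hγ ⟨ha, hab.trans hb⟩ x)]
  nlinarith [sq_pos_of_ne_zero hx]

lemma integrable_score_zero (hγ : Integrable γ) (hγ0 : ∀ u, 0 ≤ γ u) (ha : a ∈ Ico 0 1) :
    Integrable (score γ a) (gaussianReal 0 1) :=
  ((integrable_betaFn hγ).abs.div_const (1 - a)).mono'
    (continuous_score hγ hγ0 ha).aestronglyMeasurable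
    (ae_of_all _ (abs_score_le hγ0 ha.1 le_rfl ha.2))

lemma integrable_score (hγ : Integrable γ) (hγ0 : ∀ u, 0 ≤ γ u) (ha : a ∈ Ioo 0 1)
    (μ : Measure ℝ) [IsFiniteMeasure μ] : Integrable (score γ a) μ :=
  have ha' : a ∈ Ico 0 1 := ⟨ha.1.le, ha.2⟩
  .of_mem_Icc (-(1 - a)⁻¹) a⁻¹ (continuous_score hγ hγ0 ha').aemeasurable
    (ae_of_all _ fun x => ⟨neg_inv_one_sub_le_score hγ0 ha' x, score_le_inv hγ0 ha x⟩)

lemma mtilde_le_inv_one_sub (hγ : Integrable γ) (hγ0 : ∀ u, 0 ≤ γ u) (ha : a ∈ Ico 0 1) :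
    mtilde γ a ≤ (1 - a)⁻¹ := by
  have h := integral_mono (integrable_const _) (integrable_score_zero hγ hγ0 ha)
    (neg_inv_one_sub_le_score hγ0 ha)
  rw [integral_const, probReal_univ, one_smul] at h
  rw [mtilde_eq_neg_integral_score]
  linarith

lemma continuousOn_mtilde (hγ : Integrable γ) (hγ0 : ∀ u, 0 ≤ γ u) (hb : b < 1) :
    ContinuousOn (mtilde γ) (Icc 0 b) := by
  have hmem {a : ℝ} (ha : a ∈ Icc 0 b) : a ∈ Ico 0 1 := ⟨ha.1, ha.2.trans_lt hb⟩
  refine (continuousOn_of_dominated (F := score γ) (bound := fun x => |betaFn γ x| / (1 - b))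
    (fun a ha => (continuous_score hγ hγ0 (hmem ha)).aestronglyMeasurable)
    (fun a ha => ae_of_all _ (abs_score_le hγ0 ha.1 ha.2 hb))
    ((integrable_betaFn hγ).abs.div_const _) (ae_of_all _ fun x => ?_)).neg
  exact continuousOn_const.div (by fun_prop) fun a ha =>
    (one_add_mul_betaFn_pos hγ0 (hmem ha) x).ne'

end Score

/-- Even probability densities on `ℝ`: the properties of the slab `γ` used throughout, apart from
the weight of its tails. -/
structure IsSymmetricDensity (γ : ℝ → ℝ) : Prop where
  nonneg : ∀ u, 0 ≤ γ u
  even : Function.Even γ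
  integrable : Integrable γ
  integral_eq_one : ∫ u, γ u = 1

/-- `ζ` is a pseudo-threshold for the slab `γ`: it solves `β(ζ(α)) = 1 / α` for `α ∈ (0, 1]`. -/
def IsPseudoThreshold (γ ζ : ℝ → ℝ) : Prop :=
  ∀ a ∈ Ioc (0 : ℝ) 1, 0 < ζ a ∧ betaFn γ (ζ a) = 1 / a

namespace IsSymmetricDensity

variable {γ : ℝ → ℝ} (hγ : IsSymmetricDensity γ)
include hγ

lemma strictMonoOn_betaFn : StrictMonoOn (betaFn γ) (Ici 0) := by
  have hsupp : 0 < volume (Function.support fun u => exp (-u ^ 2 / 2) * γ u) := by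
    have : Function.support (fun u => exp (-u ^ 2 / 2) * γ u) = Function.support γ := by
      ext u
      simp [(exp_pos _).ne']
    rw [this, ← integral_pos_iff_support_of_nonneg hγ.nonneg hγ.integrable, hγ.integral_eq_one]
    exact one_pos
  have h := strictMonoOn_integral_cosh_mul
    (fun u => mul_nonneg (exp_pos _).le (hγ.nonneg u)) hsupp
    (integrable_cosh_mul_exp_mul hγ.integrable)
  simp only [← betaFn_add_one_eq_integral_cosh hγ.integrable hγ.even] at h
  exact fun x hx y hy hxy => lt_of_add_lt_add_right (h hx hy hxy)

lemma exists_betaFn_ne_zero : ∃ x, betaFn γ x ≠ 0 := by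
  by_contra! h
  have := hγ.strictMonoOn_betaFn self_mem_Ici (mem_Ici.2 zero_le_one) one_pos
  rw [h, h] at this
  exact this.false

lemma mtilde_zero : mtilde γ 0 = 0 := by
  simp [mtilde_eq_neg_integral_score, score, integral_betaFn hγ.integrable, hγ.integral_eq_one]

lemma strictMonoOn_mtilde : StrictMonoOn (mtilde γ) (Ico 0 1) := by
  intro a ha b hb hab
  have := isOpenPosMeasure_gaussianReal 0 one_ne_zero
  obtain ⟨x, hx⟩ := hγ.exists_betaFn_ne_zero
  have hpos : 0 < ∫ x, (score γ a x - score γ b x) ∂gaussianReal 0 1 :=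
    integral_pos_of_integrable_nonneg_nonzero
      ((continuous_score hγ.integrable hγ.nonneg ha).sub
        (continuous_score hγ.integrable hγ.nonneg hb))
      ((integrable_score_zero hγ.integrable hγ.nonneg ha).sub
        (integrable_score_zero hγ.integrable hγ.nonneg hb))
      (fun x => sub_nonneg.2 (score_le_score hγ.nonneg ha.1 hab.le hb.2 x))
      (sub_pos.2 (score_lt_score hγ.nonneg ha.1 hab hb.2 hx)).ne'
  rw [integral_sub (integrable_score_zero hγ.integrable hγ.nonneg ha)
    (integrable_score_zero hγ.integrable hγ.nonneg hb)] at hpos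
  rw [mtilde_eq_neg_integral_score, mtilde_eq_neg_integral_score]
  linarith

lemma mtilde_nonneg {a : ℝ} (ha : a ∈ Ico 0 1) : 0 ≤ mtilde γ a :=
  hγ.mtilde_zero ▸ hγ.strictMonoOn_mtilde.monotoneOn ⟨le_rfl, one_pos⟩ ha ha.1

lemma mtilde_pos {a : ℝ} (ha : a ∈ Ioo 0 1) : 0 < mtilde γ a :=
  hγ.mtilde_zero ▸ hγ.strictMonoOn_mtilde ⟨le_rfl, one_pos⟩ ⟨ha.1.le, ha.2⟩ ha.1

lemma strictMonoOn_mul_mtilde : StrictMonoOn (fun a => a * mtilde γ a) (Ico 0 1) :=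
  fun _ ha _ hb hab =>
    mul_lt_mul'' hab (hγ.strictMonoOn_mtilde ha hb hab) ha.1 (hγ.mtilde_nonneg ha)

lemma half_betaFn_mul_Phibar_sub_le_m1 (μ : ℝ) {a z : ℝ} (ha : a ∈ Ioo 0 1) (hz : 0 ≤ z)
    (hβz : betaFn γ z = 1 / a) :
    betaFn γ z * Phibar (z - μ) / 2 - (1 - a)⁻¹ ≤ m1 γ μ a := by
  have hind : Integrable ((Ioi z).indicator fun _ => a⁻¹ / 2) (gaussianReal μ 1) :=
    (integrable_const _).indicator measurableSet_Ioi
  have hscore (x : ℝ) : (Ioi z).indicator (fun _ => a⁻¹ / 2) x - (1 - a)⁻¹ ≤ score γ a x := by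
    rcases le_or_gt x z with hx | hx
    · rw [indicator_of_notMem (notMem_Ioi.2 hx), zero_sub]
      exact neg_inv_one_sub_le_score hγ.nonneg ⟨ha.1.le, ha.2⟩ x
    · have hβx : a⁻¹ ≤ betaFn γ x := by
        rw [← one_div, ← hβz]
        exact hγ.strictMonoOn_betaFn.monotoneOn hz (hz.trans hx.le) hx.le
      have h1a : 0 ≤ (1 - a)⁻¹ := inv_nonneg.2 (sub_nonneg.2 ha.2.le)
      rw [indicator_of_mem (mem_Ioi.2 hx)]
      linarith [half_inv_le_score ha.1 hβx]
  have h := integral_mono (hind.sub (integrable_const (1 - a)⁻¹))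
    (integrable_score hγ.integrable hγ.nonneg ha (gaussianReal μ 1)) hscore
  simp only [Pi.sub_apply] at h
  rw [integral_sub hind (integrable_const _), integral_indicator_const _ measurableSet_Ioi,
    gaussianReal_real_Ioi, integral_const, probReal_univ, one_smul, smul_eq_mul] at h
  rw [m1_eq_integral_score, hβz, one_div]
  linarith

lemma inv_betaFn_mem_Ioc {a z₁ z : ℝ} (ha : 0 < a) (hz₁ : 0 ≤ z₁) (hβ : betaFn γ z₁ = 1 / a)
    (hz : z₁ ≤ z) : (betaFn γ z)⁻¹ ∈ Ioc 0 a := by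
  have hle : a⁻¹ ≤ betaFn γ z := by
    rw [← one_div, ← hβ]
    exact hγ.strictMonoOn_betaFn.monotoneOn hz₁ (hz₁.trans hz) hz
  have hpos : 0 < betaFn γ z := (inv_pos.2 ha).trans_le hle
  exact ⟨inv_pos.2 hpos, inv_le_of_inv_le₀ ha hle⟩

lemma exists_betaFn_mul_Phibar_eq {C a z₁ : ℝ} (hC : 0 ≤ C) (ha : a ∈ Ioo 0 1) (hz₁ : 0 ≤ z₁)
    (hβ : betaFn γ z₁ = 1 / a) (hleft : 1 ≤ C * a * mtilde γ a)
    (htend : Tendsto (fun z => betaFn γ z * Phibar (z - z₁)) atTop atTop) :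
    ∃ z, z₁ ≤ z ∧ betaFn γ z * Phibar (z - z₁) = C * mtilde γ (betaFn γ z)⁻¹ := by
  have hmem {z : ℝ} (hz : z₁ ≤ z) := hγ.inv_betaFn_mem_Ioc ha.1 hz₁ hβ hz
  have hβc := continuous_betaFn hγ.integrable
  have hcont : ContinuousOn (fun z => C * mtilde γ (betaFn γ z)⁻¹) (Ici z₁) := by
    refine continuousOn_const.mul ((continuousOn_mtilde hγ.integrable hγ.nonneg ha.2).comp
      (hβc.continuousOn.inv₀ fun z hz => ?_) fun z hz => Ioc_subset_Icc_self (hmem hz))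
    exact (inv_pos.1 (hmem hz).1).ne'
  have hstart : betaFn γ z₁ * Phibar (z₁ - z₁) ≤ C * mtilde γ (betaFn γ z₁)⁻¹ := by
    rw [hβ, one_div, inv_inv]
    calc a⁻¹ * Phibar (z₁ - z₁) ≤ a⁻¹ :=
          mul_le_of_le_one_right (inv_nonneg.2 ha.1.le) (Phibar_le_one _)
      _ ≤ C * mtilde γ a := by
          rw [inv_le_iff_one_le_mul₀ ha.1]
          linarith
  obtain ⟨y, hzy, hy⟩ := ((eventually_ge_atTop z₁).and
    (htend.eventually_ge_atTop (C * (1 - a)⁻¹))).exists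
  have hend : C * mtilde γ (betaFn γ y)⁻¹ ≤ betaFn γ y * Phibar (y - z₁) := by
    refine le_trans (mul_le_mul_of_nonneg_left ?_ hC) hy
    have ha' := hmem hzy
    refine (mtilde_le_inv_one_sub hγ.integrable hγ.nonneg ⟨ha'.1.le, ha'.2.trans_lt ha.2⟩).trans ?_
    exact inv_anti₀ (sub_pos.2 ha.2) (by linarith [ha'.2])
  exact isPreconnected_Ici.intermediate_value₂ self_mem_Ici (mem_Ici.2 hzy)
    (hβc.mul (continuous_Phibar.comp (by fun_prop))).continuousOn hcont hstart hend

end IsSymmetricDensity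

namespace IsPseudoThreshold

variable {γ ζ : ℝ → ℝ} (hζ : IsPseudoThreshold γ ζ) (hγ : IsSymmetricDensity γ)
include hζ hγ

lemma le_apply {a z : ℝ} (ha : a ∈ Ioc 0 1) (hz : 0 ≤ z) (h : betaFn γ z ≤ 1 / a) : z ≤ ζ a := by
  obtain ⟨hpos, hβ⟩ := hζ a ha
  rwa [← hβ, hγ.strictMonoOn_betaFn.le_iff_le hz hpos.le] at h

lemma antitoneOn : AntitoneOn ζ (Ioc 0 1) := fun a ha b hb hab => by
  refine hζ.le_apply hγ ha (hζ b hb).1.le ?_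
  rw [(hζ b hb).2]
  exact one_div_le_one_div_of_le ha.1 hab

lemma apply_inv_betaFn {z : ℝ} (hz : 0 ≤ z) (h : (betaFn γ z)⁻¹ ∈ Ioc 0 1) :
    ζ (betaFn γ z)⁻¹ = z := by
  obtain ⟨hpos, hβ⟩ := hζ _ h
  rw [one_div, inv_inv] at hβ
  exact hγ.strictMonoOn_betaFn.injOn hpos.le hz hβ

end IsPseudoThreshold

section Oversmoothing

variable {γ : ℝ → ℝ}

lemma IsSymmetricDensity.exists_forall_mul_mtilde_le (hγ : IsSymmetricDensity γ) {Z : ℝ}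
    (hZ : 0 ≤ Z) : ∃ c > 0, ∀ a ∈ Ioo (0 : ℝ) 1, a * mtilde γ a ≤ c →
      a ≤ 1 / 2 ∧ ∀ ζ, IsPseudoThreshold γ ζ → Z ≤ ζ a := by
  set M := max (betaFn γ Z) 2
  have hM : 2 ≤ M := le_max_right _ _
  have hM_half : M⁻¹ ≤ 1 / 2 := by
    rw [one_div]
    exact inv_anti₀ two_pos hM
  have hM_mem : M⁻¹ ∈ Ioo (0 : ℝ) 1 := ⟨inv_pos.2 (by linarith), by linarith⟩
  refine ⟨M⁻¹ * mtilde γ M⁻¹, mul_pos hM_mem.1 (hγ.mtilde_pos hM_mem), fun a ha h => ?_⟩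
  have haM : a ≤ M⁻¹ := (hγ.strictMonoOn_mul_mtilde.le_iff_le (Ioo_subset_Ico_self ha)
    (Ioo_subset_Ico_self hM_mem)).1 h
  refine ⟨haM.trans hM_half, fun ζ hζ => hζ.le_apply hγ (Ioo_subset_Ioc_self ha) hZ ?_⟩
  rw [one_div]
  exact (le_max_left _ _).trans (le_inv_of_le_inv₀ ha.1 haM)

lemma card_le_abs_le_of_mem_ell0 {n s : ℕ} {θ : Fin n → ℝ} (hθ : θ ∈ ell0 n s) {t : ℝ}
    (ht : 0 < t) : Nat.card {i : Fin n // t ≤ |θ i|} ≤ s :=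
  (Nat.card_le_card_of_injective (Subtype.impEmbedding _ _ fun _ hi => abs_pos.1 (ht.trans_le hi))
    (Function.Embedding.injective _)).trans hθ

lemma exists_Phibar_eq_mul_mtilde (hγ : IsSymmetricDensity γ) {ζ : ℝ → ℝ}
    (hζ : IsPseudoThreshold γ ζ) {C a₁ : ℝ} (hC : 0 ≤ C) (ha₁ : a₁ ∈ Ioo 0 1)
    (hleft : 1 ≤ C * a₁ * mtilde γ a₁)
    (htend : Tendsto (fun z => betaFn γ z * Phibar (z - ζ a₁)) atTop atTop) :
    ∃ a ∈ Ioc 0 a₁, Phibar (ζ a - ζ a₁) = C * a * mtilde γ a := by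
  obtain ⟨hpos, hβ⟩ := hζ a₁ (Ioo_subset_Ioc_self ha₁)
  obtain ⟨z, hz, heq⟩ := hγ.exists_betaFn_mul_Phibar_eq hC ha₁ hpos.le hβ hleft htend
  have hmem := hγ.inv_betaFn_mem_Ioc ha₁.1 hpos.le hβ hz
  refine ⟨(betaFn γ z)⁻¹, hmem, ?_⟩
  rw [hζ.apply_inv_betaFn hγ (hpos.le.trans hz) ⟨hmem.1, hmem.2.trans ha₁.2.le⟩, mul_right_comm,
    ← heq, mul_right_comm, mul_inv_cancel₀ (inv_pos.1 hmem.1).ne', one_mul]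

lemma quarter_betaFn_mul_Phibar_le_m1 (hγ : IsSymmetricDensity γ) {ζ : ℝ → ℝ}
    (hζ : IsPseudoThreshold γ ζ) {a μ : ℝ} (ha : a ∈ Ioc 0 (1 / 2))
    (h : 8 ≤ betaFn γ (ζ a) * Phibar (ζ a - μ)) :
    1 / 4 * betaFn γ (ζ a) * Phibar (ζ a - μ) ≤ m1 γ μ a := by
  have ha1 : a < 1 := ha.2.trans_lt one_half_lt_one
  obtain ⟨hpos, hβ⟩ := hζ a ⟨ha.1, ha1.le⟩
  have hinv : (1 - a)⁻¹ ≤ 2 := inv_le_of_inv_le₀ two_pos (by linarith [ha.2])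
  linarith [hγ.half_betaFn_mul_Phibar_sub_le_m1 μ ⟨ha.1, ha1⟩ hpos.le hβ]

theorem m1_lower_bound_oversmoothing_general (hγ : IsSymmetricDensity γ) {C c d : ℝ} (hC : 0 < C)
    (hc : 0 ≤ c) (htail : ∀ u, C * exp (-(c * |u|)) ≤ γ u) (hd : d ∈ Ioc 0 8) :
    ∃ c0 > 0, ∀ n s : ℕ, (s : ℝ) ≤ c0 * n → ∀ ζ, IsPseudoThreshold γ ζ →
      ∀ α1 ∈ Ioo (0 : ℝ) 1, d * α1 * mtilde γ α1 = (s : ℝ) / n →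
        (∀ θ0 ∈ ell0 n s, ∀ π1 : ℝ, π1 = (Nat.card {i : Fin n // ζ α1 ≤ |θ0 i|} : ℝ) / n →
          0 < π1 → ∃ α ∈ Ioc 0 α1, Phibar (ζ α - ζ α1) = 8 * π1⁻¹ * α * mtilde γ α) ∧
        ∀ α ∈ Ioc 0 α1, 1 / 4 * betaFn γ (ζ α) * Phibar (ζ α - ζ α1) ≤ m1 γ (ζ α1) α := by
  obtain ⟨Z, hZ0, hZ⟩ := exists_forall_le_betaFn_mul_Phibar hγ.integrable hC hc htail 8
  obtain ⟨r, hr0, hr⟩ := hγ.exists_forall_mul_mtilde_le hZ0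
  refine ⟨d * r, mul_pos hd.1 hr0, fun n s hs ζ hζ α1 hα1 heq => ?_⟩
  have hα1r : α1 * mtilde γ α1 ≤ r := by
    refine le_of_mul_le_mul_left ?_ hd.1
    rw [← mul_assoc, heq]
    exact div_le_of_le_mul₀ n.cast_nonneg (mul_pos hd.1 hr0).le hs
  obtain ⟨hα1_half, hZζ⟩ := hr α1 hα1 hα1r
  obtain ⟨hlarge, htend⟩ := hZ (ζ α1) (hZζ ζ hζ)
  constructor
  · intro θ0 hθ0 π1 hπ1 hπ1_pos
    have hπ1_le : π1 ≤ 8 * α1 * mtilde γ α1 := by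
      have hcard := card_le_abs_le_of_mem_ell0 hθ0 (hζ α1 (Ioo_subset_Ioc_self hα1)).1
      have hm := (hγ.mtilde_pos hα1).le
      calc π1 ≤ (s : ℝ) / n := by rw [hπ1]; gcongr
        _ = d * α1 * mtilde γ α1 := heq.symm
        _ ≤ 8 * α1 * mtilde γ α1 := by have := hα1.1; gcongr; exact hd.2
    refine exists_Phibar_eq_mul_mtilde hγ hζ (by positivity) hα1 ?_ htend
    calc (1 : ℝ) ≤ π1⁻¹ * (8 * α1 * mtilde γ α1) := by
          rwa [inv_mul_eq_div, one_le_div hπ1_pos]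
      _ = 8 * π1⁻¹ * α1 * mtilde γ α1 := by ring
  · intro α hα
    have hζα : ζ α1 ≤ ζ α :=
      hζ.antitoneOn hγ ⟨hα.1, hα.2.trans hα1.2.le⟩ (Ioo_subset_Ioc_self hα1) hα.2
    exact quarter_betaFn_mul_Phibar_le_m1 hγ hζ ⟨hα.1, hα.2.trans hα1_half⟩ (hlarge _ hζα)

end Oversmoothing

section Cauchy

lemma cauchyPDFReal_zero_one : cauchyPDFReal 0 1 = cauchyDen := by
  ext x
  simp [cauchyPDFReal, cauchyDen, add_comm, mul_comm]

lemma isSymmetricDensity_cauchyDen : IsSymmetricDensity cauchyDen where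
  nonneg u := by unfold cauchyDen; positivity
  even u := by simp only [cauchyDen, neg_sq]
  integrable := cauchyPDFReal_zero_one ▸ integrable_cauchyPDFReal 0
  integral_eq_one := cauchyPDFReal_zero_one ▸ integral_cauchyPDFReal_eq_one 0 one_ne_zero

lemma exp_neg_abs_le_cauchyDen (u : ℝ) : (2 * π)⁻¹ * exp (-(1 * |u|)) ≤ cauchyDen u := by
  have hquad : 1 + u ^ 2 ≤ 2 * exp |u| := by
    have := quadratic_le_exp_of_nonneg (abs_nonneg u)
    rw [sq_abs] at this
    linarith [abs_nonneg u]
  rw [cauchyDen, one_mul, exp_neg, ← mul_inv]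
  refine inv_anti₀ (by positivity) ?_
  linear_combination π * hquad

end Cauchy

/-- Lemma 7: lower bound on `m₁` at the oversmoothing
threshold.  With `ζ` the pseudo-threshold (`β(ζ(a)) = 1/a`), `α₁` defined by
`d α₁ m̃(α₁) = s_n/n` for small enough `d`, `ζ₁ = ζ(α₁)` and
`π₁ = n⁻¹ #{i : |θ₀ᵢ| ≥ ζ₁} > 0`, the equation
`Φ̄(ζ(α) - ζ₁) = 8 π₁⁻¹ α m̃(α)` has a solution `α ∈ (0, α₁]`, and its
largest solution `α₃` satisfies
`m₁(ζ₁, α₃) ≥ (1/4) β(ζ₃) Φ̄(ζ₃ - ζ₁)` with `ζ₃ = ζ(α₃)`, provided the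
constant `c₀` in `s_n ≤ c₀ n` is small enough. -/
theorem m1_lower_bound_oversmoothing :
    ∃ d > (0 : ℝ), ∃ c0 > (0 : ℝ), ∃ N0 : ℕ,
      ∀ n : ℕ, N0 ≤ n → ∀ s : ℕ, 1 ≤ s → (s : ℝ) ≤ c0 * n →
      ∀ ζf : ℝ → ℝ,
        (∀ a ∈ Set.Ioc (0 : ℝ) 1, 0 < ζf a ∧ betaFn cauchyDen (ζf a) = 1 / a) →
      ∀ α1 : ℝ, α1 ∈ Set.Ioo (0 : ℝ) 1 →
        d * α1 * mtilde cauchyDen α1 = (s : ℝ) / n →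
      ∀ θ0 ∈ ell0 n s, ∀ π1 : ℝ,
        π1 = (Nat.card {i : Fin n // ζf α1 ≤ |θ0 i|} : ℝ) / n → 0 < π1 →
        (∃ α ∈ Set.Ioc (0 : ℝ) α1,
          Phibar (ζf α - ζf α1) = 8 * π1⁻¹ * α * mtilde cauchyDen α) ∧
        ∀ α3 ∈ Set.Ioc (0 : ℝ) α1,
          Phibar (ζf α3 - ζf α1) = 8 * π1⁻¹ * α3 * mtilde cauchyDen α3 →
          (∀ α ∈ Set.Ioc (0 : ℝ) α1,
            Phibar (ζf α - ζf α1) = 8 * π1⁻¹ * α * mtilde cauchyDen α → α ≤ α3) →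
          (1 / 4) * betaFn cauchyDen (ζf α3) * Phibar (ζf α3 - ζf α1) ≤
            m1 cauchyDen (ζf α1) α3 := by
  obtain ⟨c0, hc0, h⟩ := m1_lower_bound_oversmoothing_general isSymmetricDensity_cauchyDen
    (by positivity) zero_le_one exp_neg_abs_le_cauchyDen (d := 1) ⟨one_pos, by norm_num⟩
  refine ⟨1, one_pos, c0, hc0, 0, fun n _ s _ hs ζf hζ α1 hα1 heq θ0 hθ0 π1 hπ1 hπ1_pos => ?_⟩
  obtain ⟨hsol, hbound⟩ := h n s hs ζf hζ α1 hα1 heq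
  exact ⟨hsol θ0 hθ0 π1 hπ1 hπ1_pos, fun α3 hα3 _ _ => hbound α3 hα3⟩

end
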